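/- Let n, p ≥ 1, let r_1, …, r_p ∈ ℂⁿ be arbitrary vectors, and let z ∈ ℂ with Im z > 0. Set D = ∑_{j=1}^p r_j r_j* − z·I_n and, for each j, D_j = D − r_j r_j*. Then D and every D_j are invertible, each denominator 1 + r_j*·D_j^{-1}·r_j is nonzero, and the Stieltjes-transform identity (1/p)·tr( (Y*Y − z·I_p)^{-1} ) = −(1/(pz))·∑_{j=1}^p 1/(1 + r_j*·D_j^{-1}·r_j) holds, where Y = (r_1, …, r_p) is the n×p matrix with columns r_j. -/

import Mathlib

open Matrix BigOperators

/-- `D = ∑_j r_j r_j* − z I_n`. -/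
noncomputable def Dmat (n p : ℕ) (r : Fin p → Fin n → ℂ) (z : ℂ) :
    Matrix (Fin n) (Fin n) ℂ :=
  (∑ j : Fin p, Matrix.vecMulVec (r j) (star (r j))) - z • 1

/-- `D_j = D − r_j r_j*`. -/
noncomputable def Djmat (n p : ℕ) (r : Fin p → Fin n → ℂ) (z : ℂ) (j : Fin p) :
    Matrix (Fin n) (Fin n) ℂ :=
  Dmat n p r z - Matrix.vecMulVec (r j) (star (r j))

/-- The quadratic form `r_j* D_j⁻¹ r_j`. -/
noncomputable def quadRD (n p : ℕ) (r : Fin p → Fin n → ℂ) (z : ℂ) (j : Fin p) : ℂ :=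
  ∑ s : Fin n, ∑ t : Fin n,
    (starRingEnd ℂ) (r j s) * ((Djmat n p r z j)⁻¹ s t) * r j t

/-- The `n × p` matrix `Y` with columns `r_1, …, r_p`. -/
def Ymat (n p : ℕ) (r : Fin p → Fin n → ℂ) : Matrix (Fin n) (Fin p) ℂ :=
  Matrix.of fun s j => r j s

/-!
If `A` and `B = A - u vᵀ` are invertible, the resolvent identity gives
`B⁻¹ - A⁻¹ = A⁻¹ u vᵀ B⁻¹`, hence `(1 - vᵀ A⁻¹ u) (1 + vᵀ B⁻¹ u) = 1`. For `u = r_j`, `v = r_j*`,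
`A = D` this shows that the denominators do not vanish and that their inverses are
`1 - r_j* D⁻¹ r_j`, the diagonal entries of `1 - Y* D⁻¹ Y`. Since `(Y* Y - z) Y* = Y* (Y Y* - z)`,
that matrix is `-z (Y* Y - z)⁻¹`, so summing over `j` yields the trace. Invertibility holds because
`Y Y*` and `Y Y* - r_j r_j*` are positive semidefinite while `z` is not a nonnegative real.
-/

lemma mul_eq_sum_vecMulVec {R l m n : Type*} [NonUnitalNonAssocSemiring R] [Fintype n]
    (U : Matrix l n R) (V : Matrix n m R) : U * V = ∑ j, vecMulVec (U.col j) (V.row j) := by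
  ext s t
  simp [mul_apply, Matrix.sum_apply, vecMulVec_apply]

lemma mul_mul_apply_eq_dotProduct_mulVec {R k l m n : Type*} [NonUnitalSemiring R] [Fintype l]
    [Fintype m] (V : Matrix k l R) (A : Matrix l m R) (U : Matrix m n R) (i : k) (j : n) :
    (V * A * U) i j = V.row i ⬝ᵥ A *ᵥ U.col j := by
  rw [Matrix.mul_assoc]
  rfl

lemma one_sub_mul_one_add_dotProduct_inv_mulVec {R m : Type*} [CommRing R] [Fintype m]
    [DecidableEq m] {A : Matrix m m R} {u v : m → R}
    (hA : IsUnit A) (hB : IsUnit (A - vecMulVec u v)) :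
    (1 - v ⬝ᵥ A⁻¹ *ᵥ u) * (1 + v ⬝ᵥ (A - vecMulVec u v)⁻¹ *ᵥ u) = 1 := by
  set B := A - vecMulVec u v with hB_def
  have resolvent : A⁻¹ - B⁻¹ = -(A⁻¹ * vecMulVec u v * B⁻¹) := by
    rw [inv_sub_inv (iff_of_true hA hB), hB_def, sub_sub_cancel_left, Matrix.mul_neg,
      Matrix.neg_mul]
  have scalar : v ⬝ᵥ A⁻¹ *ᵥ u - v ⬝ᵥ B⁻¹ *ᵥ u = -((v ⬝ᵥ A⁻¹ *ᵥ u) * (v ⬝ᵥ B⁻¹ *ᵥ u)) := by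
    rw [← dotProduct_sub, ← sub_mulVec, resolvent, neg_mulVec, dotProduct_neg,
      ← mulVec_mulVec, ← mulVec_mulVec, vecMulVec_mulVec, mulVec_smul, dotProduct_smul,
      op_smul_eq_mul]
  linear_combination -scalar

section Field

variable {K m n : Type*} [Field K] [Fintype m] [DecidableEq m] [Fintype n] [DecidableEq n]

lemma inv_mul_sub_smul_one {U : Matrix m n K} {V : Matrix n m K} {z : K} (hz : z ≠ 0)
    (hD : IsUnit (U * V - z • 1)) :
    (V * U - z • 1)⁻¹ = -z⁻¹ • (1 - V * (U * V - z • 1)⁻¹ * U) := by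
  have intertwine : (V * U - z • 1) * V = V * (U * V - z • 1) := by
    simp [Matrix.sub_mul, Matrix.mul_sub, Matrix.mul_assoc]
  have cancel : (V * U - z • 1) * (V * (U * V - z • 1)⁻¹ * U) = V * U := by
    rw [← Matrix.mul_assoc, ← Matrix.mul_assoc, intertwine,
      mul_nonsing_inv_cancel_right _ _ ((isUnit_iff_isUnit_det _).1 hD)]
  apply inv_eq_right_inv
  rw [Matrix.mul_smul, Matrix.mul_sub, cancel, Matrix.mul_one, sub_sub_cancel_left, smul_neg,
    neg_smul, neg_neg, inv_smul_smul₀ hz]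

lemma trace_inv_mul_sub_smul_one {U : Matrix m n K} {V : Matrix n m K} {z : K} (hz : z ≠ 0)
    (hD : IsUnit (U * V - z • 1))
    (hDj : ∀ j, IsUnit (U * V - z • 1 - vecMulVec (U.col j) (V.row j))) :
    trace (V * U - z • 1)⁻¹ = -z⁻¹ * ∑ j,
      (1 + V.row j ⬝ᵥ (U * V - z • 1 - vecMulVec (U.col j) (V.row j))⁻¹ *ᵥ U.col j)⁻¹ := by
  rw [inv_mul_sub_smul_one hz hD, trace_smul, smul_eq_mul, trace]
  congr! with j
  rw [diag_apply, Matrix.sub_apply, one_apply_eq, mul_mul_apply_eq_dotProduct_mulVec]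
  exact eq_inv_of_mul_eq_one_left (one_sub_mul_one_add_dotProduct_inv_mulVec hD (hDj j))

end Field

section RCLike

open scoped ComplexOrder

variable {𝕜 m n : Type*} [RCLike 𝕜]

lemma not_nonneg_of_im_ne_zero {z : 𝕜} (hz : RCLike.im z ≠ 0) : ¬0 ≤ z :=
  fun h => hz (RCLike.nonneg_iff.1 h).2

lemma isUnit_sub_smul_one_of_posSemidef [Fintype m] [DecidableEq m] {A : Matrix m m 𝕜}
    (hA : A.PosSemidef) {z : 𝕜} (hz : ¬0 ≤ z) : IsUnit (A - z • 1) := by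
  have hz_spectrum : z ∉ spectrum 𝕜 A := fun h =>
    hz ((posSemidef_iff_isHermitian_and_spectrum_nonneg.1 hA).2 h)
  rwa [spectrum.notMem_iff, ← IsUnit.neg_iff, neg_sub, Algebra.algebraMap_eq_smul_one]
    at hz_spectrum

lemma posSemidef_mul_conjTranspose_sub_vecMulVec [Finite m] [Fintype n] (Y : Matrix m n 𝕜)
    (j : n) : (Y * Yᴴ - vecMulVec (Y.col j) (star (Y.col j))).PosSemidef := by
  classical
  have eq_sum_erase : Y * Yᴴ - vecMulVec (Y.col j) (star (Y.col j)) =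
      ∑ i ∈ Finset.univ.erase j, vecMulVec (Y.col i) (star (Y.col i)) := by
    rw [Finset.sum_erase_eq_sub (Finset.mem_univ j), mul_eq_sum_vecMulVec]
    rfl
  rw [eq_sum_erase]
  exact posSemidef_sum _ fun i _ => posSemidef_vecMulVec_self_star (Y.col i)

theorem stieltjes_transform_identity_general [Fintype m] [DecidableEq m] [Fintype n]
    [DecidableEq n] (Y : Matrix m n 𝕜) {z : 𝕜} (hz : ¬0 ≤ z) :
    IsUnit (Y * Yᴴ - z • 1) ∧
    (∀ j, IsUnit (Y * Yᴴ - z • 1 - vecMulVec (Y.col j) (star (Y.col j)))) ∧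
    (∀ j, 1 + star (Y.col j) ⬝ᵥ
      (Y * Yᴴ - z • 1 - vecMulVec (Y.col j) (star (Y.col j)))⁻¹ *ᵥ Y.col j ≠ 0) ∧
    trace (Yᴴ * Y - z • 1)⁻¹ = -z⁻¹ * ∑ j, (1 + star (Y.col j) ⬝ᵥ
      (Y * Yᴴ - z • 1 - vecMulVec (Y.col j) (star (Y.col j)))⁻¹ *ᵥ Y.col j)⁻¹ := by
  have hz0 : z ≠ 0 := fun h => hz h.ge
  have hD : IsUnit (Y * Yᴴ - z • 1) :=
    isUnit_sub_smul_one_of_posSemidef (posSemidef_self_mul_conjTranspose Y) hz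
  have hDj (j : n) : IsUnit (Y * Yᴴ - z • 1 - vecMulVec (Y.col j) (star (Y.col j))) := by
    rw [sub_right_comm]
    exact isUnit_sub_smul_one_of_posSemidef (posSemidef_mul_conjTranspose_sub_vecMulVec Y j) hz
  exact ⟨hD, hDj, fun j => right_ne_zero_of_mul_eq_one <|
    one_sub_mul_one_add_dotProduct_inv_mulVec hD (hDj j), trace_inv_mul_sub_smul_one hz0 hD hDj⟩

end RCLike

section Complex

variable (n p : ℕ) (r : Fin p → Fin n → ℂ) (z : ℂ)

lemma Dmat_eq_Ymat_mul_conjTranspose_sub_smul_one :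
    Dmat n p r z = Ymat n p r * (Ymat n p r)ᴴ - z • 1 := by
  rw [mul_eq_sum_vecMulVec]
  rfl

lemma quadRD_eq_dotProduct_mulVec (j : Fin p) :
    quadRD n p r z j = star (r j) ⬝ᵥ (Djmat n p r z j)⁻¹ *ᵥ r j := by
  simp [quadRD, dotProduct, mulVec, Finset.mul_sum, mul_assoc]

end Complex

/-- (0521(28)) of the paper, after Silverstein (1995):
for any vectors `r_1, …, r_p ∈ ℂⁿ` and any `z` with `Im z > 0`, the matrices
`D = ∑_j r_j r_j* − z I_n` and `D_j = D − r_j r_j*` are invertible, the denominators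
`1 + r_j* D_j⁻¹ r_j` are nonzero, and
`p⁻¹ tr((Y*Y − z I_p)⁻¹) = −(pz)⁻¹ ∑_j (1 + r_j* D_j⁻¹ r_j)⁻¹`. -/
theorem stieltjes_transform_identity
    (n p : ℕ) (hn : 1 ≤ n) (hp : 1 ≤ p)
    (r : Fin p → Fin n → ℂ) (z : ℂ) (hz : 0 < z.im) :
    IsUnit (Dmat n p r z) ∧
    (∀ j : Fin p, IsUnit (Djmat n p r z j)) ∧
    (∀ j : Fin p, 1 + quadRD n p r z j ≠ 0) ∧
    (1 / (p : ℂ)) * Matrix.trace (((Ymat n p r)ᴴ * Ymat n p r - z • 1)⁻¹) =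
      -(1 / ((p : ℂ) * z)) * ∑ j : Fin p, (1 + quadRD n p r z j)⁻¹ := by
  obtain ⟨hD, hDj, hden, htrace⟩ :=
    stieltjes_transform_identity_general (Ymat n p r) (not_nonneg_of_im_ne_zero hz.ne')
  have hscale : -(1 / ((p : ℂ) * z)) = 1 / p * -z⁻¹ := by ring
  simp only [quadRD_eq_dotProduct_mulVec, Djmat, Dmat_eq_Ymat_mul_conjTranspose_sub_smul_one]
  rw [hscale, mul_assoc]
  exact ⟨hD, hDj, hden, congrArg _ htrace⟩
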